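/- There exists T_0 > 0 such that for every T > T_0 the function f_T(γ) = γ² − γ·coth(γT)·tanh(T) − sech²(T) satisfies: f_T(γ) < 0 for all γ ∈ (0,1]; f_T is strictly increasing on (1,∞); f_T has exactly one zero γ(T) in (0,∞), and this zero lies in (1,∞); moreover γ(T) → 1 as T → ∞. -/

import Mathlib

/-- The function `f_T(γ) = γ² - γ·coth(γT)·tanh(T) - sech²(T)`
(with `coth s = cosh s / sinh s` and `sech T = (cosh T)⁻¹`). -/
noncomputable def fNeumannEven (T γ : ℝ) : ℝ :=
  γ ^ 2 - γ * (Real.cosh (γ * T) / Real.sinh (γ * T)) * Real.tanh T - ((Real.cosh T)⁻¹) ^ 2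

lemma coth_anti_aux {x y : ℝ} (hx : 0 < x) (hxy : x ≤ y) :
    Real.cosh y / Real.sinh y ≤ Real.cosh x / Real.sinh x := by
  have h1 : 0 < Real.sinh x := Real.sinh_pos_iff.2 hx
  have h2 : 0 < Real.sinh y := Real.sinh_pos_iff.2 (hx.trans_le hxy)
  have h3 : 0 ≤ Real.sinh (y - x) := Real.sinh_nonneg_iff.2 (by linarith)
  rw [Real.sinh_sub] at h3
  rw [div_le_div_iff₀ h2 h1]
  nlinarith

lemma coth_tanh_aux {T : ℝ} (hT : 0 < T) :
    Real.cosh T / Real.sinh T * Real.tanh T = 1 := by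
  have h1 : 0 < Real.sinh T := Real.sinh_pos_iff.2 hT
  have h2 := Real.cosh_pos T
  rw [Real.tanh_eq_sinh_div_cosh]
  field_simp

lemma tanh_pos_aux {T : ℝ} (hT : 0 < T) : 0 < Real.tanh T := by
  rw [Real.tanh_eq_sinh_div_cosh]
  exact div_pos (Real.sinh_pos_iff.2 hT) (Real.cosh_pos T)

lemma coth_tanh_le_aux {T γ : ℝ} (hT : 0 < T) (hγ : 1 ≤ γ) :
    Real.cosh (γ * T) / Real.sinh (γ * T) * Real.tanh T ≤ 1 := by
  rw [← coth_tanh_aux hT]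
  exact mul_le_mul_of_nonneg_right (coth_anti_aux hT (by nlinarith)) (tanh_pos_aux hT).le

lemma f_neg_aux {T γ : ℝ} (hT : 0 < T) (h0 : 0 < γ) (h1 : γ ≤ 1) : fNeumannEven T γ < 0 := by
  have hs : 0 < ((Real.cosh T)⁻¹) ^ 2 := by have := Real.cosh_pos T; positivity
  have h : 1 ≤ Real.cosh (γ * T) / Real.sinh (γ * T) * Real.tanh T := by
    rw [← coth_tanh_aux hT]
    exact mul_le_mul_of_nonneg_right (coth_anti_aux (by positivity) (by nlinarith))
      (tanh_pos_aux hT).le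
  unfold fNeumannEven
  nlinarith [mul_le_mul_of_nonneg_left h h0.le]

lemma f_mono_aux {T a b : ℝ} (hT : 0 < T) (ha : 1 ≤ a) (hab : a < b) :
    fNeumannEven T a < fNeumannEven T b := by
  have h1 := coth_tanh_le_aux hT ha
  have h2 := mul_le_mul_of_nonneg_right (coth_anti_aux (x := a * T) (y := b * T)
    (by nlinarith) (by nlinarith)) (tanh_pos_aux hT).le
  unfold fNeumannEven
  generalize Real.cosh (a * T) / Real.sinh (a * T) = p at *
  generalize Real.cosh (b * T) / Real.sinh (b * T) = q at *
  generalize Real.tanh T = t at *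
  have h3 : b * (q * t) ≤ b * (p * t) := mul_le_mul_of_nonneg_left h2 (by linarith)
  have h4 : (b - a) * (p * t) ≤ (b - a) * 1 := mul_le_mul_of_nonneg_left h1 (by linarith)
  nlinarith

lemma f_lower_aux {T a : ℝ} (hT : 0 < T) (ha : 1 ≤ a) :
    a ^ 2 - a - ((Real.cosh T)⁻¹) ^ 2 ≤ fNeumannEven T a := by
  have h1 := mul_le_mul_of_nonneg_left (coth_tanh_le_aux hT ha) (by linarith : 0 ≤ a)
  unfold fNeumannEven
  nlinarith

lemma sech_le_aux {T : ℝ} : ((Real.cosh T)⁻¹) ^ 2 ≤ (Real.cosh T)⁻¹ := by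
  have h := inv_le_one_of_one_le₀ (Real.one_le_cosh T)
  have h0 : 0 < (Real.cosh T)⁻¹ := inv_pos.2 (Real.cosh_pos T)
  nlinarith

lemma f_exists_aux {T : ℝ} (hT : 0 < T) : ∃ γ, 1 < γ ∧ fNeumannEven T γ = 0 := by
  have hc : ContinuousOn (fNeumannEven T) (Set.Icc 1 2) := by
    unfold fNeumannEven
    have : ∀ x ∈ Set.Icc (1:ℝ) 2, Real.sinh (x * T) ≠ 0 := fun x hx =>
      (Real.sinh_pos_iff.2 (mul_pos (by linarith [hx.1]) hT)).ne'
    have c1 : Continuous fun x : ℝ => Real.cosh (x * T) :=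
      Real.continuous_cosh.comp (by fun_prop)
    have c2 : Continuous fun x : ℝ => Real.sinh (x * T) :=
      Real.continuous_sinh.comp (by fun_prop)
    have c3 := c1.continuousOn.div c2.continuousOn this
    exact (((continuousOn_id.pow 2).sub ((continuousOn_id.mul c3).mul continuousOn_const)).sub
      continuousOn_const)
  have h1 := f_neg_aux hT one_pos le_rfl
  have h2 := f_lower_aux (a := 2) hT (by norm_num)
  have h3 := inv_le_one_of_one_le₀ (Real.one_le_cosh T)
  have h4 := sech_le_aux (T := T)
  obtain ⟨γ, hγ, h⟩ := intermediate_value_Icc (by norm_num) hc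
    (show (0:ℝ) ∈ Set.Icc _ _ from ⟨h1.le, by linarith⟩)
  refine ⟨γ, lt_of_le_of_ne hγ.1 ?_, h⟩
  rintro rfl
  linarith

/-- There exists `T₀ > 0` such that for every `T > T₀`: `f_T < 0` on `(0,1]`; `f_T` is
strictly increasing on `(1,∞)`; `f_T` has exactly one zero `γ(T)` in `(0,∞)`, which lies in
`(1,∞)`; and `γ(T) → 1` as `T → ∞`. -/
theorem neumann_even_eigenvalue_equation :
    ∃ T₀ : ℝ, 0 < T₀ ∧ ∃ g : ℝ → ℝ,
      (∀ T : ℝ, T₀ < T →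
        (∀ γ : ℝ, 0 < γ → γ ≤ 1 → fNeumannEven T γ < 0) ∧
        StrictMonoOn (fNeumannEven T) (Set.Ioi 1) ∧
        1 < g T ∧ fNeumannEven T (g T) = 0 ∧
        (∀ γ : ℝ, 0 < γ → fNeumannEven T γ = 0 → γ = g T)) ∧
      Filter.Tendsto g Filter.atTop (nhds 1) := by
  classical
  have hex : ∀ T : ℝ, ∃ γ, 1 < T → 1 < γ ∧ fNeumannEven T γ = 0 := by
    intro T
    by_cases h : 1 < T
    · obtain ⟨γ, hγ⟩ := f_exists_aux (T := T) (by linarith)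
      exact ⟨γ, fun _ => hγ⟩
    · exact ⟨0, fun h' => absurd h' h⟩
  choose g hg using hex
  refine ⟨1, one_pos, g, ?_, ?_⟩
  · intro T hT
    have hT0 : 0 < T := by linarith
    obtain ⟨h1, h2⟩ := hg T hT
    refine ⟨fun γ => f_neg_aux hT0, fun a ha b _ hab => f_mono_aux hT0 (le_of_lt ha) hab,
      h1, h2, ?_⟩
    intro γ h0 hγ
    by_cases hle : γ ≤ 1
    · linarith [f_neg_aux hT0 h0 hle]
    · push Not at hle
      rcases lt_trichotomy γ (g T) with h | h | h
      · linarith [f_mono_aux hT0 hle.le h]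
      · exact h
      · linarith [f_mono_aux hT0 h1.le h]
  · have hlim : Filter.Tendsto (fun T : ℝ => 1 + T⁻¹) Filter.atTop (nhds 1) := by
      simpa using tendsto_inv_atTop_zero.const_add (1 : ℝ)
    refine tendsto_of_tendsto_of_tendsto_of_le_of_le' tendsto_const_nhds hlim ?_ ?_
    · filter_upwards [Filter.eventually_gt_atTop 1] with T hT using (hg T hT).1.le
    · filter_upwards [Filter.eventually_gt_atTop 1] with T hT
      obtain ⟨h1, h2⟩ := hg T hT
      have hT0 : 0 < T := by linarith
      have h3 := f_lower_aux hT0 h1.le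
      have h4 := sech_le_aux (T := T)
      have h5 : T ≤ Real.cosh T :=
        (Real.self_le_sinh_iff.2 hT0.le).trans (Real.sinh_lt_cosh T).le
      have h6 := inv_anti₀ hT0 h5
      nlinarith
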